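/- For every 0 ≤ t ≤ ∞, the set N_t^1 of real-valued MPNN feature functions on M_t is closed under pointwise multiplication and under linear combinations, contains the constant-one function, and separates the points of M_t. -/

import Mathlib

open MeasureTheory Set

noncomputable section

/-- Borel measures of total mass at most one on `X`. -/
abbrev SubProb (X : Type) [MeasurableSpace X] : Type :=
  {μ : Measure X // μ Set.univ ≤ 1}

/-- The weak topology on `SubProb X`: the coarsest topology making all maps
`μ ↦ ∫ f dμ` for bounded continuous `f` continuous. -/
def subProbWeakTop (X : Type) [MeasurableSpace X] [TopologicalSpace X] :
    TopologicalSpace (SubProb X) :=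
  ⨅ f : BoundedContinuousFunction X ℝ,
    TopologicalSpace.induced (fun μ => ∫ x, f x ∂μ.val) inferInstance

/-- Iterated degree measure spaces with their (weak) topologies:
`M 0` is a one-point space and `M (h+1)` is the space of Borel measures of total
mass at most one on `M h` with the weak topology. -/
def IDM : ℕ → Σ X : Type, TopologicalSpace X
  | 0 => ⟨Unit, inferInstance⟩
  | (h+1) =>
      let p := IDM h
      ⟨@SubProb p.1 (@borel p.1 p.2), @subProbWeakTop p.1 (@borel p.1 p.2) p.2⟩

/-- The space of iterated degree measures of depth `h`. -/
def M (h : ℕ) : Type := (IDM h).1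

instance (h : ℕ) : TopologicalSpace (M h) := (IDM h).2
instance (h : ℕ) : MeasurableSpace (M h) := borel (M h)
instance (h : ℕ) : BorelSpace (M h) := ⟨rfl⟩

def toSub {h : ℕ} (α : M (h+1)) : SubProb (M h) := α
def ofSub {h : ℕ} (μ : SubProb (M h)) : M (h+1) := μ
/-- The underlying measure of an iterated degree measure. -/
def toMeas {h : ℕ} (α : M (h+1)) : Measure (M h) := (toSub α).1

/-- The projections `p_{h+1,h} : M (h+1) → M h`, given by pushforward. -/
def projM : (h : ℕ) → M (h+1) → M h
  | 0, _ => ()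
  | (h+1), α => ofSub ⟨(toMeas α).map (projM h), by
      by_cases hf : AEMeasurable (projM h) (toMeas α)
      · rw [Measure.map_apply_of_aemeasurable hf MeasurableSet.univ, Set.preimage_univ]
        exact (toSub α).2
      · rw [Measure.map_of_not_aemeasurable hf]
        simp⟩

/-- The inverse limit `M_∞` of the spaces `M h` along the projections,
with the subspace topology of the product topology. -/
abbrev Minf : Type := {α : (h : ℕ) → M h // ∀ h, projM h (α (h+1)) = α h}

instance : MeasurableSpace Minf := borel Minf
instance : BorelSpace Minf := ⟨rfl⟩
/-- An MPNN model: dimensions `d t`, an initial feature `φ₀ ∈ ℝ^{d 0}`, and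
continuous update functions `φ t : ℝ^{d t} → ℝ^{d (t+1)}`. An `L`-layer model uses
the layers `φ 0, …, φ (L-1)`. -/
structure MPNNModel where
  d : ℕ → ℕ
  φ₀ : EuclideanSpace ℝ (Fin (d 0))
  φ : (t : ℕ) → EuclideanSpace ℝ (Fin (d t)) → EuclideanSpace ℝ (Fin (d (t+1)))
  cont : ∀ t, Continuous (φ t)

/-- MPNN features on iterated degree measures: `h^{(0)}_α = φ₀` and
`h^{(t+1)}_α = φ_t (∫ h^{(t)}_β dα(β))`. -/
def idmFeat (m : MPNNModel) : (t : ℕ) → M t → EuclideanSpace ℝ (Fin (m.d t))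
  | 0, _ => m.φ₀
  | (t+1), α => m.φ t (∫ β, idmFeat m t β ∂(toMeas α))



/-- The set `{∫ h^{(t)}_β dα : α ∈ M (t+1)}` of attainable aggregated inputs of the
layer function `φ t`. -/
def aggSet (m : MPNNModel) (t : ℕ) : Set (EuclideanSpace ℝ (Fin (m.d t))) :=
  {z | ∃ α : M (t+1), z = ∫ β, idmFeat m t β ∂(toMeas α)}

/-- An `L`-layer MPNN model: each of the used layer functions is Lipschitz on its
compact set of attainable aggregated inputs. -/
def LipModel (m : MPNNModel) (L : ℕ) : Prop :=
  ∀ t, t < L → ∃ K : NNReal, LipschitzOnWith K (m.φ t) (aggSet m t)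

/-- The set `N_t^1` of real-valued MPNN feature functions on `M t`. -/
def NSet (t : ℕ) : Set (M t → ℝ) :=
  {f | ∃ m : MPNNModel, LipModel m t ∧ m.d t = 1 ∧
    f = fun α => ∑ i, idmFeat m t α i}

/-- The set `N_∞^1` of real-valued MPNN feature functions on `M = M_∞`. -/
def NSetInf : Set (Minf → ℝ) :=
  {f | ∃ (t : ℕ) (m : MPNNModel), LipModel m t ∧ m.d t = 1 ∧
    f = fun α => ∑ i, idmFeat m t (α.1 t) i}


theorem subProb_finite {X : Type} [MeasurableSpace X] (μ : SubProb X) : IsFiniteMeasure μ.val :=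
  ⟨lt_of_le_of_lt μ.2 ENNReal.one_lt_top⟩

theorem subProb_continuous_integral {X : Type} [MeasurableSpace X] [TopologicalSpace X]
    (f : BoundedContinuousFunction X ℝ) :
    @Continuous _ _ (subProbWeakTop X) _ (fun μ : SubProb X => ∫ x, f x ∂μ.val) :=
  continuous_iInf_dom (i := f) continuous_induced_dom

theorem subProb_continuous_rng {X Y : Type} [MeasurableSpace X] [TopologicalSpace X]
    [TopologicalSpace Y] (F : Y → SubProb X)
    (h : ∀ f : BoundedContinuousFunction X ℝ, Continuous fun y => ∫ x, f x ∂(F y).val) :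
    @Continuous _ _ _ (subProbWeakTop X) F :=
  continuous_iInf_rng.2 fun f => continuous_induced_rng.2 (h f)

theorem subProb_compact {X : Type} [MeasurableSpace X] [TopologicalSpace X] [BorelSpace X]
    [CompactSpace X] [T2Space X] : @CompactSpace (SubProb X) (subProbWeakTop X) := by
  let := subProbWeakTop X
  have hc := isCompact_setOfPred_finiteMeasure_le_of_compactSpace X 1
  have hc' : CompactSpace {μ : FiniteMeasure X | μ.mass ≤ 1} := isCompact_iff_compactSpace.1 hc
  let F : {μ : FiniteMeasure X | μ.mass ≤ 1} → SubProb X := fun μ => ⟨μ.1, by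
    have := μ.2
    simp only [Set.mem_ofPred_eq] at this
    rw [← FiniteMeasure.ennreal_mass]
    exact_mod_cast this⟩
  have hF : Continuous F := subProb_continuous_rng F fun f =>
    (FiniteMeasure.continuous_integral_boundedContinuousFunction f).comp continuous_subtype_val
  have hs : Function.Surjective F := by
    intro μ
    have := subProb_finite μ
    have h := μ.2
    let ν : FiniteMeasure X := ⟨μ.1, inferInstance⟩
    refine ⟨⟨ν, ?_⟩, rfl⟩
    change ν.mass ≤ 1
    rw [← ENNReal.coe_le_coe, FiniteMeasure.ennreal_mass]
    exact_mod_cast h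
  exact hs.compactSpace hF

theorem subProb_ext {X : Type} [MeasurableSpace X] [TopologicalSpace X] [BorelSpace X]
    [HasOuterApproxClosed X] (μ ν : SubProb X)
    (h : ∀ f : BoundedContinuousFunction X ℝ, ∫ x, f x ∂μ.val = ∫ x, f x ∂ν.val) : μ = ν := by
  have := subProb_finite μ
  have := subProb_finite ν
  exact Subtype.ext (ext_of_forall_integral_eq_of_IsFiniteMeasure h)

theorem integral_eq_of_dense {X : Type} [MeasurableSpace X] [TopologicalSpace X] [BorelSpace X]
    [CompactSpace X] (μ ν : Measure X) [IsFiniteMeasure μ] [IsFiniteMeasure ν]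
    (S : Set C(X, ℝ)) (hS : Dense S) (h : ∀ f ∈ S, ∫ x, f x ∂μ = ∫ x, f x ∂ν)
    (f : C(X, ℝ)) : ∫ x, f x ∂μ = ∫ x, f x ∂ν := by
  have hc : ∀ μ : Measure X, IsFiniteMeasure μ → Continuous fun f : C(X, ℝ) => ∫ x, f x ∂μ := by
    intro μ hμ
    have hi : ∀ f : C(X, ℝ), Integrable f μ := fun f =>
      f.continuous.integrable_of_hasCompactSupport (HasCompactSupport.of_compactSpace _)
    refine (LipschitzWith.of_dist_le_mul (K := (μ Set.univ).toNNReal) fun f g => ?_).continuous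
    rw [dist_eq_norm, ← integral_sub (hi f) (hi g)]
    refine (norm_integral_le_of_norm_le_const (C := dist f g)
      (Filter.Eventually.of_forall fun x => ?_)).trans (le_of_eq (mul_comm _ _))
    rw [← dist_eq_norm]
    exact ContinuousMap.dist_apply_le_dist x
  exact congrFun (Continuous.ext_on hS (hc μ inferInstance) (hc ν inferInstance) h) f

theorem subProb_metrizable {X : Type} [MeasurableSpace X] [TopologicalSpace X] [BorelSpace X]
    [CompactSpace X] [TopologicalSpace.MetrizableSpace X] :
    @TopologicalSpace.MetrizableSpace (SubProb X) (subProbWeakTop X) := by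
  let := subProbWeakTop X
  have : CompactSpace (SubProb X) := subProb_compact
  let := TopologicalSpace.metrizableSpaceMetric X
  obtain ⟨S, hSc, hSd⟩ := TopologicalSpace.exists_countable_dense C(X, ℝ)
  have : Countable S := hSc.to_subtype
  let F : SubProb X → (S → ℝ) := fun μ f => ∫ x, f.1 x ∂μ.val
  have hF : Continuous F := continuous_pi fun f =>
    subProb_continuous_integral (BoundedContinuousFunction.mkOfCompact f.1)
  have hi : Function.Injective F := by
    intro μ ν h
    have := subProb_finite μ
    have := subProb_finite ν
    refine subProb_ext μ ν fun f => ?_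
    exact integral_eq_of_dense μ.1 ν.1 S hSd (fun g hg => congrFun h ⟨g, hg⟩) f.toContinuousMap
  exact (hF.isClosedEmbedding hi).isEmbedding.metrizableSpace

theorem M_compact_metrizable (h : ℕ) :
    CompactSpace (M h) ∧ TopologicalSpace.MetrizableSpace (M h) := by
  induction h with
  | zero =>
    exact ⟨inferInstanceAs (CompactSpace Unit),
      inferInstanceAs (TopologicalSpace.MetrizableSpace Unit)⟩
  | succ h ih =>
    obtain ⟨h1, h2⟩ := ih
    exact ⟨subProb_compact (X := M h), subProb_metrizable (X := M h)⟩

instance M_compact (h : ℕ) : CompactSpace (M h) := (M_compact_metrizable h).1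
instance M_metrizable (h : ℕ) : TopologicalSpace.MetrizableSpace (M h) :=
  (M_compact_metrizable h).2

instance toMeas_finite {h : ℕ} (α : M (h+1)) : IsFiniteMeasure (toMeas α) :=
  subProb_finite (toSub α)

theorem M_continuous_integral {h : ℕ} (f : M h → ℝ) (hf : Continuous f) :
    Continuous fun α : M (h+1) => ∫ x, f x ∂(toMeas α) :=
  subProb_continuous_integral (X := M h) (BoundedContinuousFunction.mkOfCompact ⟨f, hf⟩)

theorem M_integrable {h n : ℕ} (f : M h → EuclideanSpace ℝ (Fin n)) (hf : Continuous f)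
    (α : M (h+1)) : Integrable f (toMeas α) :=
  hf.integrable_of_hasCompactSupport (HasCompactSupport.of_compactSpace f)

theorem integral_apply' {h n : ℕ} (f : M h → EuclideanSpace ℝ (Fin n)) (hf : Continuous f)
    (α : M (h+1)) (i : Fin n) : (∫ x, f x ∂(toMeas α)) i = ∫ x, f x i ∂(toMeas α) :=
  ((EuclideanSpace.proj (𝕜 := ℝ) i).integral_comp_comm (M_integrable f hf α)).symm

theorem euclid_continuous_iff {Y : Type} [TopologicalSpace Y] {n : ℕ}
    (f : Y → EuclideanSpace ℝ (Fin n)) : Continuous f ↔ ∀ i, Continuous fun y => f y i :=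
  ⟨fun h i => by fun_prop, fun h => (PiLp.continuous_toLp 2 _).comp (continuous_pi h)⟩

theorem M_continuous_integral' {h n : ℕ} (f : M h → EuclideanSpace ℝ (Fin n)) (hf : Continuous f) :
    Continuous fun α : M (h+1) => ∫ x, f x ∂(toMeas α) := by
  rw [euclid_continuous_iff]
  intro i
  simp_rw [integral_apply' f hf]
  exact M_continuous_integral _ (by fun_prop)

theorem projM_continuous (h : ℕ) : Continuous (projM h) := by
  induction h with
  | zero => exact continuous_const
  | succ h ih =>
    refine subProb_continuous_rng (X := M h) (projM (h+1)) fun f => ?_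
    have : (fun y : M (h+1+1) => ∫ x, f x ∂((toMeas y).map (projM h)))
        = fun y => ∫ x, f (projM h x) ∂(toMeas y) := by
      funext y
      exact integral_map ih.measurable.aemeasurable f.continuous.aestronglyMeasurable
    exact this ▸ M_continuous_integral _ (f.continuous.comp ih)

theorem toMeas_projM (h : ℕ) (α : M (h+2)) :
    toMeas (projM (h+1) α) = (toMeas α).map (projM h) := rfl

theorem idmFeat_continuous (m : MPNNModel) (t : ℕ) : Continuous (idmFeat m t) := by
  induction t with
  | zero => exact continuous_const
  | succ t ih => exact (m.cont t).comp (M_continuous_integral' _ ih)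

theorem aggSet_compact (m : MPNNModel) (t : ℕ) : IsCompact (aggSet m t) := by
  have : aggSet m t = Set.range fun α : M (t+1) => ∫ β, idmFeat m t β ∂(toMeas α) := by
    ext z; simp [aggSet, eq_comm]
  rw [this]
  exact isCompact_range (M_continuous_integral' _ (idmFeat_continuous m t))

/-- Zero padding / truncation. -/
def padL (a b : ℕ) : EuclideanSpace ℝ (Fin a) →L[ℝ] EuclideanSpace ℝ (Fin b) :=
  LinearMap.toContinuousLinearMap
    { toFun := fun x => WithLp.toLp 2 fun i => if h : i.1 < a then x ⟨i.1, h⟩ else 0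
      map_add' := by
        intro x y; ext i; by_cases h : i.1 < a <;> simp [h]
      map_smul' := by
        intro c x; ext i; by_cases h : i.1 < a <;> simp [h] }

theorem padL_padL {a b : ℕ} (h : a = b) (x) : padL b a (padL a b x) = x := by
  subst h; ext i; simp [padL]

theorem padL_self (a : ℕ) (x) : padL a a x = x := by
  ext i; simp [padL]

theorem continuous_ite_fun {X Y : Type} [TopologicalSpace X] [TopologicalSpace Y] {p : Prop}
    [Decidable p] (f g : X → Y) (hf : Continuous f) (hg : Continuous g) :
    Continuous (if p then f else g) := by
  split_ifs <;> assumption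

/-- Override the model from layer `t` on. -/
def extModel (m : MPNNModel) (t n : ℕ)
    (ψ : EuclideanSpace ℝ (Fin (m.d t)) → EuclideanSpace ℝ (Fin n)) (hψ : Continuous ψ) :
    MPNNModel where
  d s := if s ≤ t then m.d s else n
  φ₀ := padL _ _ m.φ₀
  φ s := if s < t then fun x => padL _ _ (m.φ s (padL _ _ x)) else fun x => padL _ _ (ψ (padL _ _ x))
  cont s := by
    have := m.cont s
    exact continuous_ite_fun _ _ (by fun_prop) (by fun_prop)

theorem extModel_feat (m : MPNNModel) (t n : ℕ)
    (ψ : EuclideanSpace ℝ (Fin (m.d t)) → EuclideanSpace ℝ (Fin n)) (hψ : Continuous ψ)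
    (s : ℕ) (hs : s ≤ t) (α : M s) :
    idmFeat (extModel m t n ψ hψ) s α = padL _ _ (idmFeat m s α) := by
  induction s with
  | zero => rfl
  | succ s ih =>
    have e : m.d s = (extModel m t n ψ hψ).d s := by
      simp only [extModel]; rw [if_pos (by omega)]
    change (extModel m t n ψ hψ).φ s (∫ β, idmFeat (extModel m t n ψ hψ) s β ∂(toMeas α)) = _
    simp_rw [ih (by omega)]
    rw [ContinuousLinearMap.integral_comp_comm _ (M_integrable _ (idmFeat_continuous m s) α)]
    have : (extModel m t n ψ hψ).φ s = fun x => padL _ _ (m.φ s (padL _ _ x)) := by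
      exact if_pos (by omega)
    rw [this]
    simp only
    rw [padL_padL e]
    rfl

theorem extModel_agg (m : MPNNModel) (t n : ℕ)
    (ψ : EuclideanSpace ℝ (Fin (m.d t)) → EuclideanSpace ℝ (Fin n)) (hψ : Continuous ψ)
    (s : ℕ) (hs : s ≤ t) (α : M (s+1)) :
    padL _ _ (∫ β, idmFeat (extModel m t n ψ hψ) s β ∂(toMeas α)) =
      ∫ β, idmFeat m s β ∂(toMeas α) := by
  have e : m.d s = (extModel m t n ψ hψ).d s := by
    simp only [extModel]; rw [if_pos (by omega)]
  simp_rw [extModel_feat m t n ψ hψ s hs]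
  rw [ContinuousLinearMap.integral_comp_comm _ (M_integrable _ (idmFeat_continuous m s) α),
    padL_padL e]

theorem lip_pad {a b c e : ℕ} (f : EuclideanSpace ℝ (Fin b) → EuclideanSpace ℝ (Fin c))
    (S : Set (EuclideanSpace ℝ (Fin a))) (T : Set (EuclideanSpace ℝ (Fin b)))
    (h : MapsTo (padL a b) S T) (hf : ∃ K, LipschitzOnWith K f T) :
    ∃ K, LipschitzOnWith K (fun x => padL c e (f (padL a b x))) S := by
  obtain ⟨K, hK⟩ := hf
  exact ⟨_, (padL c e).lipschitz.comp_lipschitzOnWith (hK.comp (padL a b).lipschitz.lipschitzOnWith h)⟩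

theorem succ_mem (m : MPNNModel) (t : ℕ) (hm : LipModel m t)
    (ψ : EuclideanSpace ℝ (Fin (m.d t)) → ℝ) (hψ : Continuous ψ)
    (hL : ∃ K, LipschitzOnWith K ψ (aggSet m t)) :
    (fun α : M (t+1) => ψ (∫ β, idmFeat m t β ∂(toMeas α))) ∈ NSet (t+1) := by
  let Ψ : EuclideanSpace ℝ (Fin (m.d t)) → EuclideanSpace ℝ (Fin 1) :=
    fun x => EuclideanSpace.single 0 (ψ x)
  have hΨ : Continuous Ψ := by
    rw [euclid_continuous_iff]
    intro i
    have : i = 0 := Subsingleton.elim _ _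
    subst this
    simpa [Ψ] using hψ
  let m' := extModel m t 1 Ψ hΨ
  have hd : m'.d (t+1) = 1 := by simp [m', extModel]
  have hφt : m'.φ t = fun x => padL _ _ (Ψ (padL _ _ x)) := by
      exact if_neg (by omega)
  refine ⟨m', ?_, hd, ?_⟩
  · intro s hs
    rcases Nat.lt_succ_iff_lt_or_eq.1 hs with h | rfl
    · have : m'.φ s = fun x => padL _ _ (m.φ s (padL _ _ x)) := by
        exact if_pos (by omega)
      rw [this]
      refine lip_pad _ _ (aggSet m s) ?_ (hm s h)
      rintro _ ⟨α, rfl⟩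
      exact ⟨α, extModel_agg m t 1 Ψ hΨ s (by omega) α⟩
    · rw [hφt]
      refine lip_pad _ _ (aggSet m s) ?_ ?_
      · rintro _ ⟨α, rfl⟩
        exact ⟨α, extModel_agg m s 1 Ψ hΨ s le_rfl α⟩
      · obtain ⟨K, hK⟩ := hL
        refine ⟨K, fun x hx y hy => ?_⟩
        have := hK hx hy
        simpa [Ψ] using this
  · funext α
    have e : idmFeat m' (t+1) α = padL _ _ (Ψ (∫ β, idmFeat m t β ∂(toMeas α))) := by
      change m'.φ t (∫ β, idmFeat m' t β ∂(toMeas α)) = _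
      rw [hφt]
      simp only
      rw [extModel_agg m t 1 Ψ hΨ t le_rfl α]
    rw [e]
    have key : ∀ (n : ℕ) (_ : n = 1) (c : ℝ),
        c = ∑ i, padL 1 n (EuclideanSpace.single 0 c) i := by
      intro n hn c
      subst hn
      simp [padL_self]
    exact key _ hd _

/-- First block of coordinates. -/
def fstL (a b : ℕ) : EuclideanSpace ℝ (Fin (a + b)) →L[ℝ] EuclideanSpace ℝ (Fin a) :=
  LinearMap.toContinuousLinearMap
    { toFun := fun x => WithLp.toLp 2 fun i => x (Fin.castAdd b i)
      map_add' := by intro x y; ext i; simp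
      map_smul' := by intro c x; ext i; simp }

/-- Second block of coordinates. -/
def sndL (a b : ℕ) : EuclideanSpace ℝ (Fin (a + b)) →L[ℝ] EuclideanSpace ℝ (Fin b) :=
  LinearMap.toContinuousLinearMap
    { toFun := fun x => WithLp.toLp 2 fun i => x (Fin.natAdd a i)
      map_add' := by intro x y; ext i; simp
      map_smul' := by intro c x; ext i; simp }

/-- Inclusion of the first block. -/
def inlL (a b : ℕ) : EuclideanSpace ℝ (Fin a) →L[ℝ] EuclideanSpace ℝ (Fin (a + b)) :=
  LinearMap.toContinuousLinearMap
    { toFun := fun x => WithLp.toLp 2 (Fin.append x.ofLp (0 : Fin b → ℝ))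
      map_add' := by
        intro x y; ext i; refine Fin.addCases (fun i => ?_) (fun i => ?_) i <;> simp
      map_smul' := by
        intro c x; ext i; refine Fin.addCases (fun i => ?_) (fun i => ?_) i <;> simp }

/-- Inclusion of the second block. -/
def inrL (a b : ℕ) : EuclideanSpace ℝ (Fin b) →L[ℝ] EuclideanSpace ℝ (Fin (a + b)) :=
  LinearMap.toContinuousLinearMap
    { toFun := fun x => WithLp.toLp 2 (Fin.append (0 : Fin a → ℝ) x.ofLp)
      map_add' := by
        intro x y; ext i; refine Fin.addCases (fun i => ?_) (fun i => ?_) i <;> simp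
      map_smul' := by
        intro c x; ext i; refine Fin.addCases (fun i => ?_) (fun i => ?_) i <;> simp }

theorem fstL_pair {a b : ℕ} (x y) : fstL a b (inlL a b x + inrL a b y) = x := by
  ext i; simp [fstL, inlL, inrL]

theorem sndL_pair {a b : ℕ} (x y) : sndL a b (inlL a b x + inrL a b y) = y := by
  ext i; simp [sndL, inlL, inrL]

/-- Run two models in parallel. -/
def pairModel (m m' : MPNNModel) : MPNNModel where
  d s := m.d s + m'.d s
  φ₀ := inlL _ _ m.φ₀ + inrL _ _ m'.φ₀
  φ s := fun z => inlL _ _ (m.φ s (fstL _ _ z)) + inrL _ _ (m'.φ s (sndL _ _ z))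
  cont s := by
    have := m.cont s
    have := m'.cont s
    fun_prop

theorem pair_agg_fst_aux (m m' : MPNNModel) (t : ℕ)
    (h : ∀ α : M t, fstL (m.d t) (m'.d t) (idmFeat (pairModel m m') t α) = idmFeat m t α)
    (α : M (t+1)) :
    fstL (m.d t) (m'.d t) (∫ β, idmFeat (pairModel m m') t β ∂(toMeas α)) =
      ∫ β, idmFeat m t β ∂(toMeas α) := by
  simp_rw [← h]
  exact (ContinuousLinearMap.integral_comp_comm _
    (M_integrable _ (idmFeat_continuous (pairModel m m') t) α)).symm

theorem pair_agg_snd_aux (m m' : MPNNModel) (t : ℕ)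
    (h : ∀ α : M t, sndL (m.d t) (m'.d t) (idmFeat (pairModel m m') t α) = idmFeat m' t α)
    (α : M (t+1)) :
    sndL (m.d t) (m'.d t) (∫ β, idmFeat (pairModel m m') t β ∂(toMeas α)) =
      ∫ β, idmFeat m' t β ∂(toMeas α) := by
  simp_rw [← h]
  exact (ContinuousLinearMap.integral_comp_comm _
    (M_integrable _ (idmFeat_continuous (pairModel m m') t) α)).symm

theorem pair_feat (m m' : MPNNModel) (t : ℕ) (α : M t) :
    fstL (m.d t) (m'.d t) (idmFeat (pairModel m m') t α) = idmFeat m t α ∧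
    sndL (m.d t) (m'.d t) (idmFeat (pairModel m m') t α) = idmFeat m' t α := by
  induction t with
  | zero => exact ⟨fstL_pair _ _, sndL_pair _ _⟩
  | succ t ih =>
    have h1 := pair_agg_fst_aux m m' t (fun α => (ih α).1) α
    have h2 := pair_agg_snd_aux m m' t (fun α => (ih α).2) α
    constructor
    · refine (fstL_pair _ _).trans ?_
      exact congrArg (m.φ t) h1
    · refine (sndL_pair _ _).trans ?_
      exact congrArg (m'.φ t) h2

theorem pair_agg_fst (m m' : MPNNModel) (t : ℕ) (α : M (t+1)) :
    fstL (m.d t) (m'.d t) (∫ β, idmFeat (pairModel m m') t β ∂(toMeas α)) =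
      ∫ β, idmFeat m t β ∂(toMeas α) :=
  pair_agg_fst_aux m m' t (fun α => (pair_feat m m' t α).1) α

theorem pair_agg_snd (m m' : MPNNModel) (t : ℕ) (α : M (t+1)) :
    sndL (m.d t) (m'.d t) (∫ β, idmFeat (pairModel m m') t β ∂(toMeas α)) =
      ∫ β, idmFeat m' t β ∂(toMeas α) :=
  pair_agg_snd_aux m m' t (fun α => (pair_feat m m' t α).2) α

theorem pair_maps_fst (m m' : MPNNModel) (t : ℕ) :
    MapsTo (fstL (m.d t) (m'.d t)) (aggSet (pairModel m m') t) (aggSet m t) := by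
  rintro _ ⟨α, rfl⟩
  exact ⟨α, pair_agg_fst m m' t α⟩

theorem pair_maps_snd (m m' : MPNNModel) (t : ℕ) :
    MapsTo (sndL (m.d t) (m'.d t)) (aggSet (pairModel m m') t) (aggSet m' t) := by
  rintro _ ⟨α, rfl⟩
  exact ⟨α, pair_agg_snd m m' t α⟩

theorem pair_lip (m m' : MPNNModel) (t : ℕ) (hm : LipModel m t) (hm' : LipModel m' t) :
    LipModel (pairModel m m') t := by
  intro s hs
  obtain ⟨K, hK⟩ := hm s hs
  obtain ⟨K', hK'⟩ := hm' s hs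
  have h1 := (inlL (m.d (s+1)) (m'.d (s+1))).lipschitz.comp_lipschitzOnWith
    (hK.comp (fstL (m.d s) (m'.d s)).lipschitz.lipschitzOnWith (pair_maps_fst m m' s))
  have h2 := (inrL (m.d (s+1)) (m'.d (s+1))).lipschitz.comp_lipschitzOnWith
    (hK'.comp (sndL (m.d s) (m'.d s)).lipschitz.lipschitzOnWith (pair_maps_snd m m' s))
  exact ⟨_, h1.add h2⟩

/-- Sum of coordinates. -/
def sumL (n : ℕ) : EuclideanSpace ℝ (Fin n) →L[ℝ] ℝ := ∑ i, EuclideanSpace.proj (𝕜 := ℝ) i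

theorem sumL_apply (n : ℕ) (x) : sumL n x = ∑ i, x i := by simp [sumL]

theorem NSet_combine (t : ℕ) (G : ℝ × ℝ → ℝ) (hG : ContDiff ℝ 1 G) (f g : M (t+1) → ℝ)
    (hf : f ∈ NSet (t+1)) (hg : g ∈ NSet (t+1)) : (fun α => G (f α, g α)) ∈ NSet (t+1) := by
  obtain ⟨m, hm, -, rfl⟩ := hf
  obtain ⟨m', hm', -, rfl⟩ := hg
  let I : EuclideanSpace ℝ (Fin ((pairModel m m').d t)) → ℝ × ℝ := fun z =>
    (sumL _ (m.φ t (fstL (m.d t) (m'.d t) z)), sumL _ (m'.φ t (sndL (m.d t) (m'.d t) z)))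
  have hI : Continuous I := by
    have := m.cont t
    have := m'.cont t
    exact Continuous.prodMk
      ((sumL _).continuous.comp ((m.cont t).comp (fstL (m.d t) (m'.d t)).continuous))
      ((sumL _).continuous.comp ((m'.cont t).comp (sndL (m.d t) (m'.d t)).continuous))
  have hIL : ∃ K, LipschitzOnWith K I (aggSet (pairModel m m') t) := by
    obtain ⟨K, hK⟩ := hm t (Nat.lt_succ_self t)
    obtain ⟨K', hK'⟩ := hm' t (Nat.lt_succ_self t)
    have h1 := (sumL (m.d (t+1))).lipschitz.comp_lipschitzOnWith
      (hK.comp (fstL (m.d t) (m'.d t)).lipschitz.lipschitzOnWith (pair_maps_fst m m' t))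
    have h2 := (sumL (m'.d (t+1))).lipschitz.comp_lipschitzOnWith
      (hK'.comp (sndL (m.d t) (m'.d t)).lipschitz.lipschitzOnWith (pair_maps_snd m m' t))
    exact ⟨_, h1.prodMk h2⟩
  have key := succ_mem (pairModel m m') t
    (pair_lip m m' t (fun s hs => hm s (by omega)) (fun s hs => hm' s (by omega)))
    (G ∘ I) (hG.continuous.comp hI) (by
      obtain ⟨K, hK⟩ := hIL
      obtain ⟨K', hK'⟩ := LocallyLipschitzOn.exists_lipschitzOnWith_of_compact
        ((aggSet_compact (pairModel m m') t).image hI)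
        (hG.locallyLipschitz.locallyLipschitzOn (s := I '' aggSet (pairModel m m') t))
      exact ⟨_, hK'.comp hK (mapsTo_image _ _)⟩)
  convert key using 1
  funext α
  refine congrArg G (Prod.ext ?_ ?_)
  · exact (sumL_apply _ _).symm.trans
      (congrArg (fun z => sumL _ (m.φ t z)) (pair_agg_fst m m' t α).symm)
  · exact (sumL_apply _ _).symm.trans
      (congrArg (fun z => sumL _ (m'.φ t z)) (pair_agg_snd m m' t α).symm)

/-- Constant model. -/
def constModel (c : ℝ) : MPNNModel where
  d _ := 1
  φ₀ := EuclideanSpace.single 0 c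
  φ _ := fun _ => EuclideanSpace.single 0 c
  cont _ := continuous_const

theorem NSet_const (t : ℕ) (c : ℝ) : (fun _ => c) ∈ NSet t := by
  refine ⟨constModel c, fun s _ => ⟨0, (LipschitzWith.const _).lipschitzOnWith⟩, rfl, ?_⟩
  funext α
  have : idmFeat (constModel c) t α = (EuclideanSpace.single 0 c : EuclideanSpace ℝ (Fin 1)) := by
    cases t <;> rfl
  rw [this]
  exact (by simp : c = ∑ i, (EuclideanSpace.single 0 c : EuclideanSpace ℝ (Fin 1)) i)

instance M_zero_subsingleton : Subsingleton (M 0) := inferInstanceAs (Subsingleton Unit)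

theorem NSet_combine' (t : ℕ) (G : ℝ × ℝ → ℝ) (hG : ContDiff ℝ 1 G) (f g : M t → ℝ)
    (hf : f ∈ NSet t) (hg : g ∈ NSet t) : (fun α => G (f α, g α)) ∈ NSet t := by
  cases t with
  | succ t => exact NSet_combine t G hG f g hf hg
  | zero =>
    have : (fun α => G (f α, g α)) = fun _ : M 0 => G (f (), g ()) := by
      funext α
      rw [Subsingleton.elim α (() : M 0)]
    rw [this]
    exact NSet_const 0 _

theorem NSet_mul (t : ℕ) : ∀ f ∈ NSet t, ∀ g ∈ NSet t, (fun α => f α * g α) ∈ NSet t :=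
  fun f hf g hg => NSet_combine' t (fun p => p.1 * p.2) (by fun_prop) f g hf hg

theorem NSet_lin (t : ℕ) : ∀ f ∈ NSet t, ∀ g ∈ NSet t, ∀ a b : ℝ,
    (fun α => a * f α + b * g α) ∈ NSet t :=
  fun f hf g hg a b => NSet_combine' t (fun p => a * p.1 + b * p.2) (by fun_prop) f g hf hg

theorem NSet_continuous (t : ℕ) (f) (hf : f ∈ NSet t) : Continuous f := by
  obtain ⟨m, -, -, rfl⟩ := hf
  have := idmFeat_continuous m t
  fun_prop

/-- The subalgebra of feature functions. -/
def NAlg (t : ℕ) : Subalgebra ℝ C(M t, ℝ) where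
  carrier := {f | (f : M t → ℝ) ∈ NSet t}
  mul_mem' := fun {f g} hf hg => NSet_mul t f hf g hg
  add_mem' := fun {f g} hf hg => by
    have := NSet_lin t f hf g hg 1 1
    simp only [one_mul] at this
    exact this
  algebraMap_mem' := fun c => NSet_const t c

theorem NSet_sep (t : ℕ) : ∀ α β : M t, α ≠ β → ∃ f ∈ NSet t, f α ≠ f β := by
  induction t with
  | zero => exact fun α β h => (h (Subsingleton.elim α β)).elim
  | succ t ih =>
    intro α β hne
    by_contra hcon
    push Not at hcon
    apply hne
    have hS : (NAlg t).SeparatesPoints := by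
      intro x y hxy
      obtain ⟨f, hf, h⟩ := ih x y hxy
      exact ⟨f, ⟨⟨f, NSet_continuous t f hf⟩, hf, rfl⟩, h⟩
    have hD : Dense ((NAlg t : Set C(M t, ℝ))) := fun f =>
      ContinuousMap.continuousMap_mem_subalgebra_closure_of_separatesPoints (NAlg t) hS f
    have hall := integral_eq_of_dense (toMeas α) (toMeas β) _ hD (by
      rintro ⟨f, hfc⟩ ⟨m, hm, hd, rfl⟩
      have h := hcon _ (succ_mem m t hm (sumL _) (sumL _).continuous
        ⟨_, (sumL _).lipschitz.lipschitzOnWith⟩)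
      rw [← ContinuousLinearMap.integral_comp_comm _ (M_integrable _ (idmFeat_continuous m t) α),
        ← ContinuousLinearMap.integral_comp_comm _
          (M_integrable _ (idmFeat_continuous m t) β)] at h
      simp only [sumL_apply] at h
      exact h)
    exact subProb_ext (X := M t) (toSub α) (toSub β) fun f => hall f.toContinuousMap

/-- Shift a model by one layer. -/
def shiftModel (m : MPNNModel) : MPNNModel where
  d := fun s => Nat.casesOn s 0 m.d
  φ₀ := 0
  φ := fun s => match s with
    | 0 => fun _ => m.φ₀
    | s+1 => m.φ s
  cont := fun s => match s with
    | 0 => continuous_const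
    | s+1 => m.cont s

theorem shift_feat (m : MPNNModel) (t : ℕ) (α : M (t+1)) :
    idmFeat (shiftModel m) (t+1) α = idmFeat m t (projM t α) := by
  induction t with
  | zero => rfl
  | succ t ih =>
    change m.φ t (∫ β, idmFeat (shiftModel m) (t+1) β ∂(toMeas α)) =
      m.φ t (∫ β, idmFeat m t β ∂((toMeas α).map (projM t)))
    rw [integral_map (projM_continuous t).measurable.aemeasurable
      (idmFeat_continuous m t).aestronglyMeasurable]
    exact congrArg (m.φ t) (integral_congr_ae (Filter.Eventually.of_forall ih))

theorem shift_lip (m : MPNNModel) (t : ℕ) (hm : LipModel m t) : LipModel (shiftModel m) (t+1) := by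
  intro s hs
  cases s with
  | zero => exact ⟨0, (LipschitzWith.const _).lipschitzOnWith⟩
  | succ s =>
    obtain ⟨K, hK⟩ := hm s (by omega)
    refine ⟨K, hK.mono ?_⟩
    rintro _ ⟨α, rfl⟩
    refine ⟨projM (s+1) α, ?_⟩
    have h : ∫ β, idmFeat m s β ∂((toMeas α).map (projM s)) =
        ∫ β, idmFeat m s (projM s β) ∂(toMeas α) :=
      integral_map (projM_continuous s).measurable.aemeasurable
        (idmFeat_continuous m s).aestronglyMeasurable
    have h2 := congrArg (fun F : M (s+1) → EuclideanSpace ℝ (Fin (m.d s)) =>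
      ∫ β, F β ∂(toMeas α)) (funext (shift_feat m s))
    exact h2.trans h.symm

theorem NSet_shift (t : ℕ) (f) (hf : f ∈ NSet t) : (fun α => f (projM t α)) ∈ NSet (t+1) := by
  obtain ⟨m, hm, hd, rfl⟩ := hf
  refine ⟨shiftModel m, shift_lip m t hm, hd, ?_⟩
  funext α
  rw [shift_feat]
  rfl

theorem NSet_lift (t k : ℕ) (f) (hf : f ∈ NSet t) :
    ∃ f' ∈ NSet (t+k), ∀ α : Minf, f' (α.1 (t+k)) = f (α.1 t) := by
  induction k with
  | zero => exact ⟨f, hf, fun _ => rfl⟩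
  | succ k ih =>
    obtain ⟨f', hf', h⟩ := ih
    refine ⟨_, NSet_shift _ _ hf', fun α => ?_⟩
    rw [← h α, ← α.2 (t+k)]
    rfl

theorem NSetInf_iff (f : Minf → ℝ) :
    f ∈ NSetInf ↔ ∃ t, ∃ g ∈ NSet t, f = fun α => g (α.1 t) := by
  constructor
  · rintro ⟨t, m, hm, hd, rfl⟩
    exact ⟨t, _, ⟨m, hm, hd, rfl⟩, rfl⟩
  · rintro ⟨t, _, ⟨m, hm, hd, rfl⟩, rfl⟩
    exact ⟨t, m, hm, hd, rfl⟩

theorem NSetInf_common (f g : Minf → ℝ) (hf : f ∈ NSetInf) (hg : g ∈ NSetInf) :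
    ∃ t, ∃ f' ∈ NSet t, ∃ g' ∈ NSet t,
      f = (fun α => f' (α.1 t)) ∧ g = fun α => g' (α.1 t) := by
  obtain ⟨t, f, hf0, rfl⟩ := (NSetInf_iff f).1 hf
  obtain ⟨s, g, hg0, rfl⟩ := (NSetInf_iff g).1 hg
  obtain ⟨f', hf', h1⟩ := NSet_lift t s f hf0
  obtain ⟨g', hg', h2⟩ := NSet_lift s t g hg0
  have e : s + t = t + s := Nat.add_comm s t
  revert g'
  rw [e]
  intro g' hg' h2
  exact ⟨t + s, f', hf', g', hg', funext fun α => (h1 α).symm, funext fun α => (h2 α).symm⟩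

/-- For every `0 ≤ t ≤ ∞`, the set `N_t^1` of real-valued MPNN feature functions is
closed under pointwise multiplication and linear combinations, contains the constant
one function, and separates the points of `M t`. -/
theorem mpnn_features_subalgebra :
    (∀ t : ℕ,
      (∀ f ∈ NSet t, ∀ g ∈ NSet t, (fun α => f α * g α) ∈ NSet t) ∧
      (∀ f ∈ NSet t, ∀ g ∈ NSet t, ∀ a b : ℝ,
        (fun α => a * f α + b * g α) ∈ NSet t) ∧
      ((fun _ => (1 : ℝ)) ∈ NSet t) ∧
      (∀ α β : M t, α ≠ β → ∃ f ∈ NSet t, f α ≠ f β)) ∧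
    ((∀ f ∈ NSetInf, ∀ g ∈ NSetInf, (fun α => f α * g α) ∈ NSetInf) ∧
      (∀ f ∈ NSetInf, ∀ g ∈ NSetInf, ∀ a b : ℝ,
        (fun α => a * f α + b * g α) ∈ NSetInf) ∧
      ((fun _ => (1 : ℝ)) ∈ NSetInf) ∧
      (∀ α β : Minf, α ≠ β → ∃ f ∈ NSetInf, f α ≠ f β)) := by
  refine ⟨fun t => ⟨NSet_mul t, NSet_lin t, NSet_const t 1, NSet_sep t⟩, ?_, ?_, ?_, ?_⟩
  · intro f hf g hg
    obtain ⟨t, f', hf', g', hg', rfl, rfl⟩ := NSetInf_common f g hf hg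
    exact (NSetInf_iff _).2 ⟨t, _, NSet_mul t _ hf' _ hg', rfl⟩
  · intro f hf g hg a b
    obtain ⟨t, f', hf', g', hg', rfl, rfl⟩ := NSetInf_common f g hf hg
    exact (NSetInf_iff _).2 ⟨t, _, NSet_lin t _ hf' _ hg' a b, rfl⟩
  · exact (NSetInf_iff _).2 ⟨0, _, NSet_const 0 1, rfl⟩
  · intro α β hne
    have : ∃ t, α.1 t ≠ β.1 t := by
      by_contra hcon
      push Not at hcon
      exact hne (Subtype.ext (funext hcon))
    obtain ⟨t, ht⟩ := this
    obtain ⟨f, hf, h⟩ := NSet_sep t _ _ ht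
    exact ⟨_, (NSetInf_iff _).2 ⟨t, f, hf, rfl⟩, h⟩

end
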